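/- arXiv:2212.12848 — 2 statements merged into one kernel-verified Lean document; each statement's English description precedes it below -/
import Mathlib

section
/- Fix R > 0, let μ, ν be Borel probability measures supported in the closed balls B̄_{d_x}(0,R) ⊂ ℝ^{d_x} and B̄_{d_y}(0,R) ⊂ ℝ^{d_y} respectively, and let A ∈ ℝ^{d_x×d_y} have all entries in [−R²/2, R²/2]. Then there exists a function φ : B̄_{d_x}(0,R) → ℝ such that, with φ^c(y) := inf_{x ∈ B̄_{d_x}(0,R)} (c_A(x,y) − φ(x)) for y ∈ B̄_{d_y}(0,R): (i) φ is concave, sup |φ| ≤ 1 + 10(1 + 4√(d_x d_y))R⁴, and φ is Lipschitz with constant at most 8(1 + 2√(d_x d_y))R³; (ii) φ^c is concave on B̄_{d_y}(0,R), sup |φ^c| ≤ 1 + 10(1 + 4√(d_x d_y))R⁴, and φ^c is Lipschitz with constant at most 8(1 + 2√(d_x d_y))R³; (iii) the pair (φ, φ^c) is optimal for the Kantorovich dual, i.e., ∫ φ dμ + ∫ φ^c dν = OT_A(μ,ν). -/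
/-!
The statement is Kantorovich duality on two compact balls together with the observation that an
optimal potential may be taken to be a `c`-transform, which inherits the regularity of the cost.

*Regularity.* For fixed `y` the cost `c_A(·, y)` is concave (a nonpositive multiple of `‖x‖²` plus
a linear term), it is bounded by `M = 4(1 + 4√(dx dy))R⁴`, and it is Lipschitz with constant
`8(1 + 2√(dx dy))R³`, both by Cauchy–Schwarz (`abs_bilinA_le`); by transposing `A` the same holds
in `y`. Infima preserve concavity and Lipschitz bounds. As `c_A(0, y) = 0`, a transform normalised
by `φ(0) = 0` satisfies `|φ| ≤ M`, and then `|φ^c| ≤ 2M`, which is within the claimed bound.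

*No duality gap* (`exists_coupling_integral_eq_superPrice`). The least price
`N(h) = inf {∫ φ dμ + ∫ ψ dν | h ≤ φ ⊕ ψ}` is a sublinear functional on `C(X × Y)`. By Hahn–Banach
some linear functional `g ≤ N` has `g(h) = N(h)`. Such a `g` is positive and equals
`∫ φ dμ + ∫ ψ dν` on `φ ⊕ ψ`, so Riesz–Markov–Kakutani turns it into a coupling `π` with
`∫ h dπ = N(h)`. Taking `h = -c` gives strong duality, with an optimal coupling.

*Attainment* (`exists_maximizer`, `exists_potential`). Any admissible pair can be improved to
`(φ, φ^c)` with `φ` a transform vanishing at the base point. The semidual objective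
`φ ↦ ∫ φ dμ + ∫ φ^c dν` is continuous for the sup norm, so it attains its maximum on the set of
Lipschitz functions vanishing at the base point, which is compact by Arzelà–Ascoli. One further
improvement makes the maximiser a transform.
-/

open MeasureTheory
open scoped ENNReal NNReal BigOperators

noncomputable section

/-- The set of couplings of two measures. -/
def Couplings {E F : Type*} [MeasurableSpace E] [MeasurableSpace F]
    (μ : Measure E) (ν : Measure F) : Set (Measure (E × F)) :=
  {π | IsProbabilityMeasure π ∧ π.map Prod.fst = μ ∧ π.map Prod.snd = ν}

/-- Quadratic (2,2) GW distortion cost of a coupling. -/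
def GWCost {E F : Type*} [NormedAddCommGroup E] [NormedAddCommGroup F]
    [MeasurableSpace E] [MeasurableSpace F] (π : Measure (E × F)) : ℝ :=
  ∫ p, (‖p.1.1 - p.2.1‖ ^ 2 - ‖p.1.2 - p.2.2‖ ^ 2) ^ 2 ∂(π.prod π)

open Classical in
/-- KL divergence, with value `⊤` when it is not finite. -/
def KLD {Z : Type*} [MeasurableSpace Z] (π ρ : Measure Z) : ℝ≥0∞ :=
  if π ≪ ρ ∧ Integrable (MeasureTheory.llr π ρ) π then
    ENNReal.ofReal (∫ z, MeasureTheory.llr π ρ z ∂π) else ⊤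

/-- ε-weighted entropic penalty. -/
def entTerm {Z : Type*} [MeasurableSpace Z] (ε : ℝ) (π ρ : Measure Z) : ℝ≥0∞ :=
  ENNReal.ofReal ε * KLD π ρ

/-- Entropic (2,2) Gromov–Wasserstein cost `S_ε`. -/
def SEps {E F : Type*} [NormedAddCommGroup E] [NormedAddCommGroup F]
    [MeasurableSpace E] [MeasurableSpace F] (ε : ℝ) (μ : Measure E) (ν : Measure F) : ℝ :=
  sInf {v | ∃ π ∈ Couplings μ ν,
    entTerm ε π (μ.prod ν) ≠ ⊤ ∧ v = GWCost π + (entTerm ε π (μ.prod ν)).toReal}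

/-- Squared (2,2) Gromov–Wasserstein distance `D(μ,ν)²`. -/
def GWsq {E F : Type*} [NormedAddCommGroup E] [NormedAddCommGroup F]
    [MeasurableSpace E] [MeasurableSpace F] (μ : Measure E) (ν : Measure F) : ℝ :=
  sInf {v | ∃ π ∈ Couplings μ ν, v = GWCost π}


/-- The marginal-only part `S¹(μ,ν)` of the GW functional. -/
def S1 {E F : Type*} [NormedAddCommGroup E] [NormedAddCommGroup F]
    [MeasurableSpace E] [MeasurableSpace F] (μ : Measure E) (ν : Measure F) : ℝ :=
  (∫ p, ‖p.1 - p.2‖ ^ 4 ∂(μ.prod μ)) + (∫ p, ‖p.1 - p.2‖ ^ 4 ∂(ν.prod ν))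
    - 4 * ∫ p, ‖p.1‖ ^ 2 * ‖p.2‖ ^ 2 ∂(μ.prod ν)

/-- The coupling-dependent part of the GW functional evaluated at a coupling. -/
def S2Cost {dx dy : ℕ}
    (π : Measure (EuclideanSpace ℝ (Fin dx) × EuclideanSpace ℝ (Fin dy))) : ℝ :=
  (∫ p, -4 * (‖p.1‖ ^ 2 * ‖p.2‖ ^ 2) ∂π)
    - 8 * ∑ i : Fin dx, ∑ j : Fin dy, (∫ p, p.1 i * p.2 j ∂π) ^ 2

/-- The coupling-dependent part `S²_ε(μ,ν)` of the entropic GW functional. -/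
def S2Eps {dx dy : ℕ} (ε : ℝ) (μ : Measure (EuclideanSpace ℝ (Fin dx)))
    (ν : Measure (EuclideanSpace ℝ (Fin dy))) : ℝ :=
  sInf {v | ∃ π ∈ Couplings μ ν,
    entTerm ε π (μ.prod ν) ≠ ⊤ ∧ v = S2Cost π + (entTerm ε π (μ.prod ν)).toReal}

/-- The cost function `c_A(x,y) = −4‖x‖²‖y‖² − 32 xᵀAy`. -/
def costA {dx dy : ℕ} (A : Matrix (Fin dx) (Fin dy) ℝ)
    (x : EuclideanSpace ℝ (Fin dx)) (y : EuclideanSpace ℝ (Fin dy)) : ℝ :=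
  -4 * (‖x‖ ^ 2 * ‖y‖ ^ 2) - 32 * ∑ i : Fin dx, ∑ j : Fin dy, x i * A i j * y j

/-- The optimal transport cost with cost function `c_A`. -/
def OTA {dx dy : ℕ} (A : Matrix (Fin dx) (Fin dy) ℝ)
    (μ : Measure (EuclideanSpace ℝ (Fin dx))) (ν : Measure (EuclideanSpace ℝ (Fin dy))) : ℝ :=
  sInf {v | ∃ π ∈ Couplings μ ν, v = ∫ p, costA A p.1 p.2 ∂π}

/-- The entropic optimal transport cost with cost function `c_A` and parameter `ε`. -/
def OTAEps {dx dy : ℕ} (A : Matrix (Fin dx) (Fin dy) ℝ) (ε : ℝ)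
    (μ : Measure (EuclideanSpace ℝ (Fin dx))) (ν : Measure (EuclideanSpace ℝ (Fin dy))) : ℝ :=
  sInf {v | ∃ π ∈ Couplings μ ν, entTerm ε π (μ.prod ν) ≠ ⊤ ∧
    v = (∫ p, costA A p.1 p.2 ∂π) + (entTerm ε π (μ.prod ν)).toReal}

/-! ### Strong duality on compact spaces -/

section Duality

variable {X Y : Type*} [MetricSpace X] [CompactSpace X] [MeasurableSpace X]
  [MetricSpace Y] [CompactSpace Y] [MeasurableSpace Y]

lemma integrable_of_continuous [BorelSpace X] (μ : Measure X) [IsFiniteMeasure μ] {f : X → ℝ}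
    (hf : Continuous f) : Integrable f μ :=
  (BoundedContinuousFunction.mkOfCompact ⟨f, hf⟩).integrable μ

/-- The prices `∫ φ dμ + ∫ ψ dν` of the continuous pairs that dominate `h`, in the sense
`h (x, y) ≤ φ x + ψ y`. -/
def superPrices (μ : Measure X) (ν : Measure Y) (h : C(X × Y, ℝ)) : Set ℝ :=
  {v | ∃ (φ : C(X, ℝ)) (ψ : C(Y, ℝ)), (∀ x y, h (x, y) ≤ φ x + ψ y) ∧
    v = (∫ x, φ x ∂μ) + ∫ y, ψ y ∂ν}

/-- The least price of a dominating pair, a sublinear functional of `h`. -/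
def superPrice (μ : Measure X) (ν : Measure Y) (h : C(X × Y, ℝ)) : ℝ :=
  sInf (superPrices μ ν h)

lemma superPrices_nonempty (μ : Measure X) (ν : Measure Y) (h : C(X × Y, ℝ)) :
    (superPrices μ ν h).Nonempty :=
  ⟨_, ContinuousMap.const X ‖h‖, 0, fun x y => by
    simpa using (le_abs_self _).trans (h.norm_coe_le_norm (x, y)), rfl⟩

variable [BorelSpace X] [BorelSpace Y] (μ : Measure X) (ν : Measure Y)
  [IsProbabilityMeasure μ] [IsProbabilityMeasure ν]

/-- Integrating `h ≤ φ ⊕ ψ` against the product measure bounds all prices from below. -/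
lemma integral_prod_le_of_mem_superPrices {h : C(X × Y, ℝ)} {v : ℝ}
    (hv : v ∈ superPrices μ ν h) : ∫ p, h p ∂(μ.prod ν) ≤ v := by
  obtain ⟨φ, ψ, hd, rfl⟩ := hv
  have h1 : Integrable (fun p : X × Y => φ p.1) (μ.prod ν) :=
    integrable_of_continuous _ (by fun_prop)
  have h2 : Integrable (fun p : X × Y => ψ p.2) (μ.prod ν) :=
    integrable_of_continuous _ (by fun_prop)
  calc ∫ p, h p ∂(μ.prod ν) ≤ ∫ p, (φ p.1 + ψ p.2) ∂(μ.prod ν) :=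
        integral_mono (integrable_of_continuous _ h.continuous) (h1.add h2)
          fun p => hd p.1 p.2
    _ = (∫ x, φ x ∂μ) + ∫ y, ψ y ∂ν := by
        rw [integral_add h1 h2, integral_fun_fst (μ := μ) (ν := ν) (fun x => φ x),
          integral_fun_snd (μ := μ) (ν := ν) (fun y => ψ y)]
        simp

lemma superPrices_bddBelow (h : C(X × Y, ℝ)) : BddBelow (superPrices μ ν h) :=
  ⟨_, fun _ hv => integral_prod_le_of_mem_superPrices μ ν hv⟩

lemma superPrice_le {h : C(X × Y, ℝ)} (φ : C(X, ℝ)) (ψ : C(Y, ℝ))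
    (hd : ∀ x y, h (x, y) ≤ φ x + ψ y) :
    superPrice μ ν h ≤ (∫ x, φ x ∂μ) + ∫ y, ψ y ∂ν :=
  csInf_le (superPrices_bddBelow μ ν h) ⟨φ, ψ, hd, rfl⟩

lemma superPrice_add_le (h k : C(X × Y, ℝ)) :
    superPrice μ ν (h + k) ≤ superPrice μ ν h + superPrice μ ν k := by
  refine le_of_forall_pos_le_add fun ε hε => ?_
  obtain ⟨_, ⟨φ, ψ, hd, rfl⟩, h1⟩ := exists_lt_of_csInf_lt (superPrices_nonempty μ ν h)
    (lt_add_of_pos_right (superPrice μ ν h) (half_pos hε))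
  obtain ⟨_, ⟨φ', ψ', hd', rfl⟩, h2⟩ := exists_lt_of_csInf_lt (superPrices_nonempty μ ν k)
    (lt_add_of_pos_right (superPrice μ ν k) (half_pos hε))
  have := superPrice_le μ ν (h := h + k) (φ + φ') (ψ + ψ') fun x y => by
    have := hd x y
    have := hd' x y
    simp only [ContinuousMap.add_apply]
    linarith
  simp only [ContinuousMap.add_apply] at this
  rw [integral_add (integrable_of_continuous _ φ.continuous)
      (integrable_of_continuous _ φ'.continuous),
    integral_add (integrable_of_continuous _ ψ.continuous)
      (integrable_of_continuous _ ψ'.continuous)] at this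
  linarith

lemma superPrice_smul_le {t : ℝ} (ht : 0 < t) (h : C(X × Y, ℝ)) :
    superPrice μ ν (t • h) ≤ t * superPrice μ ν h := by
  rw [mul_comm, ← div_le_iff₀ ht]
  refine le_csInf (superPrices_nonempty μ ν h) ?_
  rintro _ ⟨φ, ψ, hd, rfl⟩
  rw [div_le_iff₀ ht]
  have := superPrice_le μ ν (h := t • h) (t • φ) (t • ψ) fun x y => by
    simpa [mul_add] using mul_le_mul_of_nonneg_left (hd x y) ht.le
  simp only [ContinuousMap.smul_apply, smul_eq_mul, integral_const_mul] at this
  linarith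

lemma superPrice_smul {t : ℝ} (ht : 0 < t) (h : C(X × Y, ℝ)) :
    superPrice μ ν (t • h) = t * superPrice μ ν h := by
  refine le_antisymm (superPrice_smul_le μ ν ht h) ?_
  have := superPrice_smul_le μ ν (inv_pos.2 ht) (t • h)
  rw [inv_smul_smul₀ ht.ne', inv_mul_eq_div, le_div_iff₀ ht] at this
  linarith

lemma superPrice_zero : superPrice μ ν (0 : C(X × Y, ℝ)) = 0 := by
  have := superPrice_smul μ ν (zero_lt_two (α := ℝ)) (0 : C(X × Y, ℝ))
  rw [smul_zero] at this
  linarith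

/-- Hahn–Banach: the value of `superPrice` at `h` is attained by a linear functional
that lies below `superPrice` everywhere. -/
lemma exists_linear_le_superPrice (h : C(X × Y, ℝ)) :
    ∃ g : C(X × Y, ℝ) →ₗ[ℝ] ℝ, g h = superPrice μ ν h ∧ ∀ k, g k ≤ superPrice μ ν k := by
  have H : ∀ t : ℝ, t • h = 0 → (RingHom.id ℝ) t • superPrice μ ν h = 0 := by
    intro t ht
    rcases smul_eq_zero.1 ht with rfl | rfl
    · simp
    · simp [superPrice_zero]
  obtain ⟨g, hg, hle⟩ := exists_extension_of_le_sublinear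
    (LinearPMap.mkSpanSingleton' h (superPrice μ ν h) H) (superPrice μ ν)
    (fun t ht k => superPrice_smul μ ν ht k) (superPrice_add_le μ ν) (by
      rintro ⟨k, hk⟩
      obtain ⟨t, rfl⟩ := Submodule.mem_span_singleton.1 hk
      rw [LinearPMap.mkSpanSingleton'_apply]
      simp only [RingHom.id_apply, smul_eq_mul]
      rcases lt_trichotomy t 0 with ht | rfl | ht
      · -- Subadditivity gives `0 ≤ N (t • h) + N (-t • h)`.
        have h1 := superPrice_add_le μ ν (t • h) ((-t) • h)
        rw [superPrice_smul μ ν (neg_pos.2 ht), neg_smul, add_neg_cancel, superPrice_zero] at h1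
        linarith
      · simp [superPrice_zero]
      · exact (superPrice_smul μ ν ht h).ge)
  refine ⟨g, ?_, hle⟩
  have hm : (1 : ℝ) • h ∈ (LinearPMap.mkSpanSingleton' h (superPrice μ ν h) H).domain :=
    Submodule.mem_span_singleton.2 ⟨1, rfl⟩
  have := hg ⟨(1 : ℝ) • h, hm⟩
  rw [LinearPMap.mkSpanSingleton'_apply] at this
  simpa using this

/-- Strong duality on compact spaces, in terms of dominating pairs: the least price of `h` is the
integral of `h` against some coupling. The linear functional given by Hahn–Banach is positive,
so Riesz–Markov–Kakutani represents it by a measure; it agrees with `∫ φ dμ + ∫ ψ dν` on the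
functions `φ ⊕ ψ`, so the measure has marginals `μ` and `ν`. -/
lemma exists_coupling_integral_eq_superPrice (h : C(X × Y, ℝ)) :
    ∃ π ∈ Couplings μ ν, ∫ p, h p ∂π = superPrice μ ν h := by
  obtain ⟨g, hgh, hle⟩ := exists_linear_le_superPrice μ ν h
  have hpos : ∀ k : C(X × Y, ℝ), 0 ≤ k → 0 ≤ g k := by
    intro k hk
    have h1 := (hle (-k)).trans (superPrice_le μ ν 0 0 fun x y => by simpa using hk (x, y))
    simpa using h1
  have hsplit : ∀ (φ : C(X, ℝ)) (ψ : C(Y, ℝ)),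
      g (φ.comp ContinuousMap.fst + ψ.comp ContinuousMap.snd)
        = (∫ x, φ x ∂μ) + ∫ y, ψ y ∂ν := by
    intro φ ψ
    refine le_antisymm ((hle _).trans (superPrice_le μ ν φ ψ fun x y => le_rfl)) ?_
    have h1 := (hle (-(φ.comp ContinuousMap.fst + ψ.comp ContinuousMap.snd))).trans
      (superPrice_le μ ν (-φ) (-ψ) fun x y => by simp [add_comm])
    simp only [map_neg, ContinuousMap.neg_apply, integral_neg] at h1
    linarith
  let Λ : CompactlySupportedContinuousMap (X × Y) ℝ →ₚ[ℝ] ℝ := PositiveLinearMap.mk₀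
    { toFun := fun f => g f.toContinuousMap
      map_add' := fun f f' => g.map_add f.toContinuousMap f'.toContinuousMap
      map_smul' := fun t f => g.map_smul t f.toContinuousMap } fun f hf => hpos _ hf
  have hΛ : ∀ k : C(X × Y, ℝ), ∫ p, k p ∂(RealRMK.rieszMeasure Λ) = g k := fun k =>
    RealRMK.integral_rieszMeasure Λ ⟨k, HasCompactSupport.of_compactSpace _⟩
  set π := RealRMK.rieszMeasure Λ with hπ
  have hfst : π.map Prod.fst = μ := by
    refine ext_of_forall_integral_eq_of_IsFiniteMeasure fun f => ?_
    rw [integral_map (by fun_prop) (by fun_prop)]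
    have h1 := hsplit f.toContinuousMap 0
    rw [← hΛ] at h1
    simpa using h1
  have hsnd : π.map Prod.snd = ν := by
    refine ext_of_forall_integral_eq_of_IsFiniteMeasure fun f => ?_
    rw [integral_map (by fun_prop) (by fun_prop)]
    have h1 := hsplit 0 f.toContinuousMap
    rw [← hΛ] at h1
    simpa using h1
  refine ⟨π, ⟨⟨?_⟩, hfst, hsnd⟩, by rw [hΛ, hgh]⟩
  have h1 : π.map Prod.fst Set.univ = 1 := by rw [hfst]; exact measure_univ
  rwa [Measure.map_apply measurable_fst MeasurableSet.univ, Set.preimage_univ] at h1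

end Duality

/-! ### Infima of families and `c`-transforms -/

section Infima

variable {ι : Type*} [Nonempty ι]

lemma abs_iInf_sub_iInf_le {f g : ι → ℝ} {K : ℝ} (hf : BddBelow (Set.range f))
    (hg : BddBelow (Set.range g)) (h : ∀ i, |f i - g i| ≤ K) : |(⨅ i, f i) - ⨅ i, g i| ≤ K := by
  rw [abs_le]
  constructor
  · have : (⨅ i, g i) - K ≤ ⨅ i, f i := le_ciInf fun i => by
      have h1 := ciInf_le hg i
      have h2 := abs_le.1 (h i)
      linarith
    linarith
  · have : (⨅ i, f i) - K ≤ ⨅ i, g i := le_ciInf fun i => by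
      have h1 := ciInf_le hf i
      have h2 := abs_le.1 (h i)
      linarith
    linarith

lemma abs_iInf_le {f : ι → ℝ} {K : ℝ} (h : ∀ i, |f i| ≤ K) : |⨅ i, f i| ≤ K := by
  obtain ⟨i⟩ := ‹Nonempty ι›
  have hb : BddBelow (Set.range f) := ⟨-K, by rintro _ ⟨j, rfl⟩; exact (abs_le.1 (h j)).1⟩
  have : Nonempty ι := ⟨i⟩
  exact abs_le.2 ⟨le_ciInf fun j => (abs_le.1 (h j)).1, (ciInf_le hb i).trans (abs_le.1 (h i)).2⟩

lemma concaveOn_iInf {E : Type*} [AddCommGroup E] [Module ℝ E] {S : Set E} (hS : Convex ℝ S)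
    {f : ι → E → ℝ} (hf : ∀ i, ConcaveOn ℝ S (f i))
    (hb : ∀ x ∈ S, BddBelow (Set.range fun i => f i x)) :
    ConcaveOn ℝ S fun x => ⨅ i, f i x := by
  refine ⟨hS, fun x hx y hy a b ha hb' hab => le_ciInf fun i => ?_⟩
  refine le_trans ?_ ((hf i).2 hx hy ha hb' hab)
  simp only [smul_eq_mul]
  have h1 := mul_le_mul_of_nonneg_left (ciInf_le (hb x hx) i) ha
  have h2 := mul_le_mul_of_nonneg_left (ciInf_le (hb y hy) i) hb'
  exact add_le_add h1 h2

end Infima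

/-- The `c`-transform `φ^c(y) = inf_x (c(x, y) - φ(x))`. The transform in the other direction is
`cTrans (flip c)`. -/
def cTrans {X Y : Type*} (c : X → Y → ℝ) (φ : X → ℝ) (y : Y) : ℝ := ⨅ x, (c x y - φ x)

section CTransform

set_option linter.unusedSectionVars false

variable {X Y : Type*} [MetricSpace X] [CompactSpace X] [Nonempty X] [MetricSpace Y]
  {c : X → Y → ℝ} {K L : ℝ≥0}

lemma bddBelow_cTrans (hx : ∀ y, LipschitzWith K fun x => c x y) {φ : X → ℝ}
    (hφ : Continuous φ) (y : Y) : BddBelow (Set.range fun x => c x y - φ x) :=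
  (isCompact_range ((hx y).continuous.sub hφ)).bddBelow

lemma lipschitzWith_cTrans (hx : ∀ y, LipschitzWith K fun x => c x y)
    (hy : ∀ x, LipschitzWith L (c x)) {φ : X → ℝ} (hφ : Continuous φ) :
    LipschitzWith L (cTrans c φ) := by
  refine LipschitzWith.of_dist_le_mul fun y y' => ?_
  rw [Real.dist_eq]
  refine abs_iInf_sub_iInf_le (bddBelow_cTrans hx hφ y) (bddBelow_cTrans hx hφ y') fun x => ?_
  simpa [Real.dist_eq] using (hy x).dist_le_mul y y'

lemma add_cTrans_le (hx : ∀ y, LipschitzWith K fun x => c x y) {φ : X → ℝ}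
    (hφ : Continuous φ) (x : X) (y : Y) : φ x + cTrans c φ y ≤ c x y := by
  have : cTrans c φ y ≤ c x y - φ x := ciInf_le (bddBelow_cTrans hx hφ y) x
  linarith

lemma le_cTrans {φ : X → ℝ} {y : Y} {t : ℝ} (h : ∀ x, φ x + t ≤ c x y) : t ≤ cTrans c φ y :=
  le_ciInf fun x => by linarith [h x]

lemma cTrans_add_const (hx : ∀ y, LipschitzWith K fun x => c x y) {φ : X → ℝ}
    (hφ : Continuous φ) (a : ℝ) (y : Y) :
    cTrans c (fun x => φ x + a) y = cTrans c φ y - a := by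
  refine le_antisymm ?_ (le_cTrans fun x => ?_)
  · have : cTrans c (fun x => φ x + a) y + a ≤ cTrans c φ y := le_cTrans fun x => by
      have := add_cTrans_le hx (hφ.add_const a) x y
      linarith
    linarith
  · have := add_cTrans_le hx hφ x y
    linarith

end CTransform

/-! ### Attainment in the dual problem -/

section Attainment

variable {X Y : Type*} [MetricSpace X] [CompactSpace X] [MeasurableSpace X] [BorelSpace X]
  [MetricSpace Y] [CompactSpace Y] [MeasurableSpace Y] [BorelSpace Y]
  {c : X → Y → ℝ} {K L : ℝ≥0}

/-- The semidual objective `∫ φ dμ + ∫ φ^c dν`. -/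
def dualGain (c : X → Y → ℝ) (μ : Measure X) (ν : Measure Y) (φ : X → ℝ) : ℝ :=
  (∫ x, φ x ∂μ) + ∫ y, cTrans c φ y ∂ν

variable (μ : Measure X) (ν : Measure Y) [IsProbabilityMeasure μ] [IsProbabilityMeasure ν]

/-- Replacing `φ` by the transform of `ψ` does not decrease the dual objective, and moving a
constant between the two potentials normalises the transform to vanish at a base point. -/
lemma exists_improvement [Nonempty Y] (hx : ∀ y, LipschitzWith K fun x => c x y)
    (hy : ∀ x, LipschitzWith L (c x)) (x₀ : X) (φ : C(X, ℝ)) (ψ : C(Y, ℝ))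
    (hd : ∀ x y, φ x + ψ y ≤ c x y) :
    ∃ ψ' : C(Y, ℝ), cTrans (flip c) ψ' x₀ = 0 ∧
      (∫ x, φ x ∂μ) + (∫ y, ψ y ∂ν) ≤ dualGain c μ ν (cTrans (flip c) ψ') := by
  have : Nonempty X := ⟨x₀⟩
  set a := cTrans (flip c) ψ x₀ with ha
  have hshift : ∀ x, cTrans (flip c) (fun y => ψ y + a) x = cTrans (flip c) ψ x - a :=
    cTrans_add_const (c := flip c) hy ψ.continuous a
  have hψ' : Continuous fun y => ψ y + a := by fun_prop
  refine ⟨⟨fun y => ψ y + a, hψ'⟩, by simp only [ContinuousMap.coe_mk, hshift]; simp [ha], ?_⟩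
  have hφc : Continuous (cTrans (flip c) fun y => ψ y + a) :=
    (lipschitzWith_cTrans (c := flip c) hy hx hψ').continuous
  have h1 : ∫ x, (φ x - a) ∂μ ≤ ∫ x, cTrans (flip c) (fun y => ψ y + a) x ∂μ := by
    refine integral_mono (integrable_of_continuous _ (by fun_prop))
      (integrable_of_continuous _ hφc) fun x => ?_
    rw [hshift]
    have : φ x ≤ cTrans (flip c) ψ x := le_cTrans fun y => by
      have := hd x y
      simp only [flip]
      linarith
    linarith
  have h2 : ∫ y, (ψ y + a) ∂ν ≤ ∫ y, cTrans c (cTrans (flip c) fun y => ψ y + a) y ∂ν := by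
    refine integral_mono (integrable_of_continuous _ hψ')
      (integrable_of_continuous _ (lipschitzWith_cTrans hx hy hφc).continuous) fun y => ?_
    refine le_cTrans fun x => ?_
    have := add_cTrans_le (c := flip c) hy hψ' y x
    simp only [flip] at this ⊢
    linarith
  rw [integral_sub (integrable_of_continuous _ φ.continuous) (integrable_const _)] at h1
  rw [integral_add (integrable_of_continuous _ ψ.continuous) (integrable_const _)] at h2
  simp only [integral_const, probReal_univ, one_smul] at h1 h2
  simp only [dualGain, ContinuousMap.coe_mk]
  linarith

open BoundedContinuousFunction in
/-- By Arzelà–Ascoli, the semidual objective has a maximiser among the Lipschitz functions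
vanishing at a base point. -/
lemma exists_maximizer (hx : ∀ y, LipschitzWith K fun x => c x y)
    (hy : ∀ x, LipschitzWith L (c x)) (x₀ : X) :
    ∃ f : C(X, ℝ), ∀ g : X → ℝ, LipschitzWith K g → g x₀ = 0 →
      dualGain c μ ν g ≤ dualGain c μ ν f := by
  have : Nonempty X := ⟨x₀⟩
  let D : Set (X →ᵇ ℝ) := {f | f x₀ = 0 ∧ LipschitzWith K f}
  have hcompact : IsCompact D := by
    refine arzela_ascoli₂ (Metric.closedBall 0 (K * Metric.diam (Set.univ : Set X)))
      (isCompact_closedBall _ _) D ?_ ?_ ?_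
    · have h1 : IsClosed {f : X →ᵇ ℝ | f x₀ = 0} :=
        isClosed_eq (continuous_eval_const x₀) continuous_const
      have h2 : IsClosed {f : X →ᵇ ℝ | ∀ x y, dist (f x) (f y) ≤ K * dist x y} := by
        simp only [Set.ofPred_forall]
        exact isClosed_iInter fun x => isClosed_iInter fun y => isClosed_le
          ((continuous_eval_const x).dist (continuous_eval_const y)) continuous_const
      have h3 := h1.inter h2
      convert h3 using 1
      ext f
      simp [D, lipschitzWith_iff_dist_le_mul]
    · rintro f x ⟨h0, hL⟩
      rw [Metric.mem_closedBall, ← h0]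
      refine (hL.dist_le_mul x x₀).trans (mul_le_mul_of_nonneg_left ?_ K.2)
      exact Metric.dist_le_diam_of_mem isCompact_univ.isBounded trivial trivial
    · exact (LipschitzWith.uniformEquicontinuous _ K fun f => f.2.2).equicontinuous
  have hcont : Continuous fun f : X →ᵇ ℝ => dualGain c μ ν f := by
    refine (LipschitzWith.of_dist_le_mul (K := 2) fun f g => ?_).continuous
    have e1 : |(∫ x, f x ∂μ) - ∫ x, g x ∂μ| ≤ dist f g := by
      rw [← integral_sub (f.integrable μ) (g.integrable μ)]
      have := norm_integral_le_of_norm_le_const (μ := μ) (f := fun x => f x - g x)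
        (C := dist f g) (.of_forall fun x => by
          rw [← dist_eq_norm]; exact dist_coe_le_dist x)
      simpa using this
    have e2 : |(∫ y, cTrans c f y ∂ν) - ∫ y, cTrans c g y ∂ν| ≤ dist f g := by
      rw [← integral_sub
        (integrable_of_continuous _ (lipschitzWith_cTrans hx hy f.continuous).continuous)
        (integrable_of_continuous _ (lipschitzWith_cTrans hx hy g.continuous).continuous)]
      have := norm_integral_le_of_norm_le_const (μ := ν)
        (f := fun y => cTrans c f y - cTrans c g y)
        (C := dist f g) (.of_forall fun y => by
          refine abs_iInf_sub_iInf_le (bddBelow_cTrans hx f.continuous y)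
            (bddBelow_cTrans hx g.continuous y) fun x => ?_
          have := dist_coe_le_dist (f := f) (g := g) x
          rw [Real.dist_eq, abs_sub_comm] at this
          simpa using this)
      simpa using this
    rw [Real.dist_eq]
    simp only [dualGain, NNReal.coe_ofNat]
    rw [abs_le] at *
    constructor <;> linarith [e1.1, e1.2, e2.1, e2.2]
  obtain ⟨f, hfD, hf⟩ := hcompact.exists_isMaxOn
    ⟨0, by simp, LipschitzWith.of_dist_le_mul fun x y => by simp; positivity⟩ hcont.continuousOn
  refine ⟨f.toContinuousMap, fun g hg h0 => ?_⟩
  exact hf (show mkOfCompact ⟨g, hg.continuous⟩ ∈ D from ⟨h0, hg⟩)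

/-- Kantorovich duality with an attained dual: some transform `φ = ψ^c`, vanishing at the base
point, has a semidual objective at least as large as the cost of some coupling. -/
lemma exists_potential [Nonempty Y] (hx : ∀ y, LipschitzWith K fun x => c x y)
    (hy : ∀ x, LipschitzWith L (c x)) (x₀ : X) :
    ∃ ψ : C(Y, ℝ), ∃ π ∈ Couplings μ ν, cTrans (flip c) ψ x₀ = 0 ∧
      ∫ p, c p.1 p.2 ∂π ≤ dualGain c μ ν (cTrans (flip c) ψ) := by
  have : Nonempty X := ⟨x₀⟩
  have hc : Continuous fun p : X × Y => c p.1 p.2 := (LipschitzWith.uncurry hx hy).continuous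
  obtain ⟨f, hf⟩ := exists_maximizer μ ν hx hy x₀
  -- Dominating `-c` from above is the dual problem for `c`, up to sign.
  obtain ⟨π, hπ, hval⟩ := exists_coupling_integral_eq_superPrice μ ν
    (⟨fun p => -c p.1 p.2, hc.neg⟩ : C(X × Y, ℝ))
  have hbound : ∫ p, c p.1 p.2 ∂π ≤ dualGain c μ ν f := by
    have h1 : -dualGain c μ ν f ≤ superPrice μ ν ⟨fun p => -c p.1 p.2, hc.neg⟩ := by
      refine le_csInf (superPrices_nonempty μ ν _) ?_
      rintro _ ⟨φ, ψ, hd, rfl⟩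
      obtain ⟨ψ', h0, hle⟩ := exists_improvement μ ν hx hy x₀ (-φ) (-ψ) fun x y => by
        have := hd x y
        simp only [ContinuousMap.coe_mk, ContinuousMap.neg_apply] at this ⊢
        linarith
      have hmax := hf _ (lipschitzWith_cTrans (c := flip c) hy hx ψ'.continuous) h0
      simp only [ContinuousMap.neg_apply, integral_neg] at hle
      linarith
    rw [← hval] at h1
    simp only [ContinuousMap.coe_mk, integral_neg] at h1
    linarith
  obtain ⟨ψ', h0, hle⟩ := exists_improvement μ ν hx hy x₀ f
    ⟨cTrans c f, (lipschitzWith_cTrans hx hy f.continuous).continuous⟩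
    fun x y => add_cTrans_le hx f.continuous x y
  exact ⟨ψ', π, hπ, h0, hbound.trans hle⟩

end Attainment

/-! ### The cost `c_A` on balls -/

section Cost

variable {dx dy : ℕ} {R : ℝ} {A : Matrix (Fin dx) (Fin dy) ℝ}

/-- The bilinear form `xᵀ A y`. -/
def bilinA (A : Matrix (Fin dx) (Fin dy) ℝ) (x : EuclideanSpace ℝ (Fin dx))
    (y : EuclideanSpace ℝ (Fin dy)) : ℝ := ∑ i : Fin dx, ∑ j : Fin dy, x i * A i j * y j

lemma costA_eq (x : EuclideanSpace ℝ (Fin dx)) (y : EuclideanSpace ℝ (Fin dy)) :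
    costA A x y = -4 * (‖x‖ ^ 2 * ‖y‖ ^ 2) - 32 * bilinA A x y := rfl

lemma bilinA_add_smul (a b : ℝ) (x x' : EuclideanSpace ℝ (Fin dx))
    (y : EuclideanSpace ℝ (Fin dy)) :
    bilinA A (a • x + b • x') y = a * bilinA A x y + b * bilinA A x' y := by
  simp only [bilinA, PiLp.add_apply, PiLp.smul_apply, smul_eq_mul, Finset.mul_sum,
    ← Finset.sum_add_distrib]
  exact Finset.sum_congr rfl fun i _ => Finset.sum_congr rfl fun j _ => by ring

lemma costA_transpose (x : EuclideanSpace ℝ (Fin dx)) (y : EuclideanSpace ℝ (Fin dy)) :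
    costA A x y = costA A.transpose y x := by
  rw [costA, costA, Finset.sum_comm, mul_comm (‖x‖ ^ 2)]
  simp only [Matrix.transpose_apply]
  congr 2
  exact Finset.sum_congr rfl fun i _ => Finset.sum_congr rfl fun j _ => by ring

lemma costA_zero_left (y : EuclideanSpace ℝ (Fin dy)) : costA A 0 y = 0 := by
  simp [costA]

lemma continuous_costA : Continuous fun p : EuclideanSpace ℝ (Fin dx) ×
    EuclideanSpace ℝ (Fin dy) => costA A p.1 p.2 := by
  unfold costA
  fun_prop

/-- Cauchy–Schwarz over pairs of indices: the Frobenius norm of `A` is at most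
`√(dx dy) R² / 2`. -/
lemma abs_bilinA_le (hA : ∀ i j, |A i j| ≤ R ^ 2 / 2) (x : EuclideanSpace ℝ (Fin dx))
    (y : EuclideanSpace ℝ (Fin dy)) :
    |bilinA A x y| ≤ Real.sqrt (dx * dy) * (R ^ 2 / 2) * (‖x‖ * ‖y‖) := by
  have hR : 0 ≤ R ^ 2 / 2 := by positivity
  refine abs_le_of_sq_le_sq ?_ (by positivity)
  have h1 : bilinA A x y = ∑ p : Fin dx × Fin dy, A p.1 p.2 * (x p.1 * y p.2) := by
    rw [Fintype.sum_prod_type]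
    exact Finset.sum_congr rfl fun i _ => Finset.sum_congr rfl fun j _ => by ring
  have h2 : ∑ p : Fin dx × Fin dy, (x p.1 * y p.2) ^ 2 = ‖x‖ ^ 2 * ‖y‖ ^ 2 := by
    rw [EuclideanSpace.real_norm_sq_eq, EuclideanSpace.real_norm_sq_eq, Finset.sum_mul_sum,
      Fintype.sum_prod_type]
    exact Finset.sum_congr rfl fun i _ => Finset.sum_congr rfl fun j _ => by ring
  have h3 : ∑ p : Fin dx × Fin dy, A p.1 p.2 ^ 2 ≤ (dx * dy) * (R ^ 2 / 2) ^ 2 := by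
    have := Finset.sum_le_card_nsmul Finset.univ
      (fun p : Fin dx × Fin dy => A p.1 p.2 ^ 2) ((R ^ 2 / 2) ^ 2)
      fun p _ => sq_le_sq.2 (by rw [abs_of_nonneg hR]; exact hA _ _)
    simpa using this
  calc bilinA A x y ^ 2
      ≤ (∑ p : Fin dx × Fin dy, A p.1 p.2 ^ 2) * ∑ p : Fin dx × Fin dy, (x p.1 * y p.2) ^ 2 := by
        rw [h1]; exact Finset.sum_mul_sq_le_sq_mul_sq _ _ _
    _ ≤ (dx * dy) * (R ^ 2 / 2) ^ 2 * (‖x‖ ^ 2 * ‖y‖ ^ 2) := by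
        rw [h2]; exact mul_le_mul_of_nonneg_right h3 (by positivity)
    _ = (Real.sqrt (dx * dy) * (R ^ 2 / 2) * (‖x‖ * ‖y‖)) ^ 2 := by
        rw [mul_pow, mul_pow, Real.sq_sqrt (by positivity), mul_pow ‖x‖]

lemma abs_costA_le (hR : 0 < R) (hA : ∀ i j, |A i j| ≤ R ^ 2 / 2)
    {x : EuclideanSpace ℝ (Fin dx)} {y : EuclideanSpace ℝ (Fin dy)} (hx : ‖x‖ ≤ R)
    (hy : ‖y‖ ≤ R) : |costA A x y| ≤ 4 * (1 + 4 * Real.sqrt (dx * dy)) * R ^ 4 := by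
  have h1 : ‖x‖ * ‖y‖ ≤ R * R := by gcongr
  have h2 : |bilinA A x y| ≤ Real.sqrt (dx * dy) * (R ^ 2 / 2) * (R * R) :=
    (abs_bilinA_le hA x y).trans (by gcongr)
  have h3 : ‖x‖ ^ 2 * ‖y‖ ^ 2 ≤ R ^ 2 * R ^ 2 := by gcongr
  have h4 : 0 ≤ ‖x‖ ^ 2 * ‖y‖ ^ 2 := by positivity
  rw [costA_eq]
  rw [abs_le] at *
  constructor <;> nlinarith [h2.1, h2.2]

lemma abs_costA_sub_le (hR : 0 < R) (hA : ∀ i j, |A i j| ≤ R ^ 2 / 2)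
    {x x' : EuclideanSpace ℝ (Fin dx)} {y : EuclideanSpace ℝ (Fin dy)} (hx : ‖x‖ ≤ R)
    (hx' : ‖x'‖ ≤ R) (hy : ‖y‖ ≤ R) :
    |costA A x y - costA A x' y| ≤ 8 * (1 + 2 * Real.sqrt (dx * dy)) * R ^ 3 * ‖x - x'‖ := by
  have h1 : |bilinA A x y - bilinA A x' y|
      ≤ Real.sqrt (dx * dy) * (R ^ 2 / 2) * (‖x - x'‖ * R) := by
    have h := bilinA_add_smul (A := A) 1 (-1) x x' y
    have e : (1 : ℝ) • x + (-1 : ℝ) • x' = x - x' := by module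
    rw [e] at h
    have e' : bilinA A x y - bilinA A x' y = bilinA A (x - x') y := by rw [h]; ring
    rw [e']
    exact (abs_bilinA_le hA _ _).trans (by gcongr)
  have h2 : |‖x‖ ^ 2 - ‖x'‖ ^ 2| ≤ ‖x - x'‖ * (2 * R) := by
    rw [sq_sub_sq, mul_comm, abs_mul]
    refine mul_le_mul (abs_norm_sub_norm_le x x') ?_ (abs_nonneg _) (norm_nonneg _)
    rw [abs_of_nonneg (by positivity)]
    linarith
  have h3 : |(‖x‖ ^ 2 - ‖x'‖ ^ 2) * ‖y‖ ^ 2| ≤ ‖x - x'‖ * (2 * R) * R ^ 2 := by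
    rw [abs_mul, abs_of_nonneg (sq_nonneg ‖y‖)]
    gcongr
  rw [costA_eq, costA_eq]
  rw [abs_le] at h1 h3 ⊢
  constructor <;> nlinarith [h1.1, h1.2, h3.1, h3.2]

lemma concaveOn_costA {S : Set (EuclideanSpace ℝ (Fin dx))} (hS : Convex ℝ S)
    (y : EuclideanSpace ℝ (Fin dy)) : ConcaveOn ℝ S fun x => costA A x y := by
  refine ⟨hS, fun x _ x' _ a b ha hb hab => ?_⟩
  have h1 : ‖a • x + b • x'‖ ^ 2 ≤ a * ‖x‖ ^ 2 + b * ‖x'‖ ^ 2 := by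
    have := ((convexOn_norm (convex_univ (𝕜 := ℝ) (E := EuclideanSpace ℝ (Fin dx)))).pow
      (fun _ _ => norm_nonneg _) 2).2 (Set.mem_univ x) (Set.mem_univ x') ha hb hab
    simpa using this
  have h2 := mul_le_mul_of_nonneg_right h1 (sq_nonneg ‖y‖)
  simp only [costA_eq, bilinA_add_smul, smul_eq_mul]
  nlinarith

end Cost

/-! ### Measures carried by a set -/

section Restriction

lemma map_comap_val_of_compl_null {E : Type*} [MeasurableSpace E] {S : Set E}
    (hS : MeasurableSet S) {μ : Measure E} (hμ : μ Sᶜ = 0) :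
    (μ.comap ((↑) : S → E)).map (↑) = μ := by
  rw [map_comap_subtype_coe hS]
  exact Measure.restrict_eq_self_of_ae_mem (mem_ae_iff.2 hμ)

lemma isProbabilityMeasure_of_map {E F : Type*} [MeasurableSpace E] [MeasurableSpace F]
    {f : E → F} (hf : Measurable f) {μ : Measure E} {ν : Measure F} [IsProbabilityMeasure ν]
    (h : μ.map f = ν) : IsProbabilityMeasure μ := by
  have h1 : μ.map f Set.univ = 1 := by rw [h]; exact measure_univ
  exact ⟨by rwa [Measure.map_apply hf MeasurableSet.univ, Set.preimage_univ] at h1⟩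

/-- A coupling of measures carried by two sets pushes forward to a coupling in the ambient
spaces. -/
lemma map_val_mem_couplings {E F : Type*} [MeasurableSpace E] [MeasurableSpace F] {S : Set E}
    {T : Set F} {μ : Measure S} {ν : Measure T} {π : Measure (S × T)} (hπ : π ∈ Couplings μ ν) :
    π.map (Prod.map (↑) (↑)) ∈ Couplings (μ.map ((↑) : S → E)) (ν.map ((↑) : T → F)) := by
  obtain ⟨h0, h1, h2⟩ := hπ
  have hm : Measurable (Prod.map (↑) (↑) : S × T → E × F) :=
    measurable_subtype_coe.prodMap measurable_subtype_coe
  refine ⟨Measure.isProbabilityMeasure_map hm.aemeasurable, ?_, ?_⟩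
  · rw [← h1, Measure.map_map measurable_fst hm,
      Measure.map_map measurable_subtype_coe measurable_fst]
    rfl
  · rw [← h2, Measure.map_map measurable_snd hm,
      Measure.map_map measurable_subtype_coe measurable_snd]
    rfl

end Restriction

/-! ### Potentials for `c_A` -/

/-- **Uniform regularity of Kantorovich potentials for the cost `c_A`** on measures supported
in the closed balls of radius `R`: there is an optimal dual pair `(φ, φ^c)` consisting of
concave, bounded, Lipschitz functions with the stated quantitative bounds. -/
theorem gw_ot_potential_regularity (dx dy : ℕ) (R : ℝ) (hR : 0 < R)
    (μ : Measure (EuclideanSpace ℝ (Fin dx))) (ν : Measure (EuclideanSpace ℝ (Fin dy)))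
    [IsProbabilityMeasure μ] [IsProbabilityMeasure ν]
    (hμ : μ (Metric.closedBall 0 R)ᶜ = 0) (hν : ν (Metric.closedBall 0 R)ᶜ = 0)
    (A : Matrix (Fin dx) (Fin dy) ℝ) (hA : ∀ i j, |A i j| ≤ R ^ 2 / 2) :
    ∃ (φ : EuclideanSpace ℝ (Fin dx) → ℝ) (ψ : EuclideanSpace ℝ (Fin dy) → ℝ),
      ψ = (fun y => sInf ((fun x => costA A x y - φ x) ''
            Metric.closedBall (0 : EuclideanSpace ℝ (Fin dx)) R)) ∧
      ConcaveOn ℝ (Metric.closedBall 0 R) φ ∧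
      (∀ x ∈ Metric.closedBall (0 : EuclideanSpace ℝ (Fin dx)) R,
        |φ x| ≤ 1 + 10 * (1 + 4 * Real.sqrt (dx * dy)) * R ^ 4) ∧
      (∀ x ∈ Metric.closedBall (0 : EuclideanSpace ℝ (Fin dx)) R,
        ∀ x' ∈ Metric.closedBall (0 : EuclideanSpace ℝ (Fin dx)) R,
          |φ x - φ x'| ≤ 8 * (1 + 2 * Real.sqrt (dx * dy)) * R ^ 3 * ‖x - x'‖) ∧
      ConcaveOn ℝ (Metric.closedBall 0 R) ψ ∧
      (∀ y ∈ Metric.closedBall (0 : EuclideanSpace ℝ (Fin dy)) R,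
        |ψ y| ≤ 1 + 10 * (1 + 4 * Real.sqrt (dx * dy)) * R ^ 4) ∧
      (∀ y ∈ Metric.closedBall (0 : EuclideanSpace ℝ (Fin dy)) R,
        ∀ y' ∈ Metric.closedBall (0 : EuclideanSpace ℝ (Fin dy)) R,
          |ψ y - ψ y'| ≤ 8 * (1 + 2 * Real.sqrt (dx * dy)) * R ^ 3 * ‖y - y'‖) ∧
      (∫ x, φ x ∂μ) + (∫ y, ψ y ∂ν) = OTA A μ ν := by
  set S : Set (EuclideanSpace ℝ (Fin dx)) := Metric.closedBall 0 R with hS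
  set T : Set (EuclideanSpace ℝ (Fin dy)) := Metric.closedBall 0 R with hT
  have hSn : ∀ x : S, ‖(x : EuclideanSpace ℝ (Fin dx))‖ ≤ R := fun x =>
    mem_closedBall_zero_iff.1 x.2
  have hTn : ∀ y : T, ‖(y : EuclideanSpace ℝ (Fin dy))‖ ≤ R := fun y =>
    mem_closedBall_zero_iff.1 y.2
  have : CompactSpace S := isCompact_iff_compactSpace.1 (isCompact_closedBall _ _)
  have : CompactSpace T := isCompact_iff_compactSpace.1 (isCompact_closedBall _ _)
  let x₀ : S := ⟨0, by simp [hS, hR.le]⟩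
  let y₀ : T := ⟨0, by simp [hT, hR.le]⟩
  have : Nonempty S := ⟨x₀⟩
  have : Nonempty T := ⟨y₀⟩
  have hSm : MeasurableSet S := Metric.isClosed_closedBall.measurableSet
  have hTm : MeasurableSet T := Metric.isClosed_closedBall.measurableSet
  have hSe : MeasurableEmbedding ((↑) : S → EuclideanSpace ℝ (Fin dx)) := .subtype_coe hSm
  have hTe : MeasurableEmbedding ((↑) : T → EuclideanSpace ℝ (Fin dy)) := .subtype_coe hTm
  set s := Real.sqrt (dx * dy) with hs
  have hs0 : 0 ≤ s := Real.sqrt_nonneg _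
  obtain ⟨μ', hμ'⟩ : ∃ μ' : Measure S, μ'.map (↑) = μ :=
    ⟨_, map_comap_val_of_compl_null hSm hμ⟩
  obtain ⟨ν', hν'⟩ : ∃ ν' : Measure T, ν'.map (↑) = ν :=
    ⟨_, map_comap_val_of_compl_null hTm hν⟩
  have : IsProbabilityMeasure μ' := isProbabilityMeasure_of_map hSe.measurable hμ'
  have : IsProbabilityMeasure ν' := isProbabilityMeasure_of_map hTe.measurable hν'
  -- The Lipschitz constant shared by both variables.
  let K : ℝ≥0 := ⟨8 * (1 + 2 * s) * R ^ 3, by positivity⟩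
  let c : S → T → ℝ := fun x y => costA A x y
  have hcx : ∀ y, LipschitzWith K fun x => c x y := fun y =>
    LipschitzWith.of_dist_le_mul fun x x' => by
      rw [Real.dist_eq, Subtype.dist_eq, dist_eq_norm]
      exact abs_costA_sub_le hR hA (hSn x) (hSn x') (hTn y)
  have hcy : ∀ x, LipschitzWith K (c x) := fun x =>
    LipschitzWith.of_dist_le_mul fun y y' => by
      rw [Real.dist_eq, Subtype.dist_eq, dist_eq_norm]
      simp only [c, costA_transpose (A := A)]
      have := abs_costA_sub_le (A := A.transpose) hR (fun i j => hA j i) (hTn y) (hTn y') (hSn x)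
      rwa [mul_comm (dy : ℝ)] at this
  -- Duality is solved on the compact balls; the infima below extend the potentials to the
  -- whole spaces, where only their values on the balls matter.
  obtain ⟨ψ₀, π, hπ, h0, hle⟩ := exists_potential μ' ν' hcx hcy x₀
  let φ : EuclideanSpace ℝ (Fin dx) → ℝ := fun x => ⨅ y : T, (costA A x y - ψ₀ y)
  let ψ : EuclideanSpace ℝ (Fin dy) → ℝ := fun y => ⨅ x : S, (costA A x y - φ x)
  have hφS : ∀ x : S, φ x = cTrans (flip c) ψ₀ x := fun x => rfl
  have hφlip : LipschitzWith K fun x : S => φ x := lipschitzWith_cTrans (c := flip c) hcy hcx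
    ψ₀.continuous
  have hψlip : LipschitzWith K fun y : T => ψ y := lipschitzWith_cTrans hcx hcy hφlip.continuous
  -- The cost and `φ` both vanish at `x = 0`, so comparing the infima defining `φ x` and `φ 0`
  -- bounds `φ` by the bound on the cost, independently of `ψ₀`.
  have hφb : ∀ x : S, |φ x| ≤ 4 * (1 + 4 * s) * R ^ 4 := fun x => by
    have e : φ x = φ x - φ x₀ := by rw [hφS x₀, h0, sub_zero]
    rw [e]
    refine abs_iInf_sub_iInf_le (bddBelow_cTrans (c := flip c) hcy ψ₀.continuous x)
      (bddBelow_cTrans (c := flip c) hcy ψ₀.continuous x₀) fun y => ?_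
    have e2 : costA A (x₀ : EuclideanSpace ℝ (Fin dx)) y = 0 := costA_zero_left _
    rw [e2]
    have e3 : costA A x y - ψ₀ y - (0 - ψ₀ y) = costA A x y := by ring
    rw [e3]
    exact abs_costA_le hR hA (hSn x) (hTn y)
  have hψb : ∀ y : T, |ψ y| ≤ 8 * (1 + 4 * s) * R ^ 4 := fun y => abs_iInf_le fun x => by
    have h1 := abs_costA_le hR hA (hSn x) (hTn y)
    have h2 := hφb x
    rw [abs_le] at *
    constructor <;> linarith [h1.1, h1.2, h2.1, h2.2]
  have hR4 : 0 ≤ (1 + 4 * s) * R ^ 4 := by positivity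
  have hφi : Integrable φ μ := by
    rw [← hμ', hSe.integrable_map_iff]
    exact integrable_of_continuous μ' hφlip.continuous
  have hψi : Integrable ψ ν := by
    rw [← hν', hTe.integrable_map_iff]
    exact integrable_of_continuous ν' hψlip.continuous
  have hgain : dualGain c μ' ν' (cTrans (flip c) ψ₀) = (∫ x, φ x ∂μ) + ∫ y, ψ y ∂ν := by
    rw [← hμ', ← hν', hSe.integral_map, hTe.integral_map]
    rfl
  have hweak : ∀ ρ ∈ Couplings μ ν,
      (∫ x, φ x ∂μ) + (∫ y, ψ y ∂ν) ≤ ∫ p, costA A p.1 p.2 ∂ρ := by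
    rintro ρ ⟨hρ, hρ1, hρ2⟩
    have a1 : ∀ᵐ p ∂ρ, p.1 ∈ S := by
      have : ∀ᵐ x ∂(ρ.map Prod.fst), x ∈ S := by rw [hρ1]; exact mem_ae_iff.2 hμ
      exact ae_of_ae_map measurable_fst.aemeasurable this
    have a2 : ∀ᵐ p ∂ρ, p.2 ∈ T := by
      have : ∀ᵐ y ∂(ρ.map Prod.snd), y ∈ T := by rw [hρ2]; exact mem_ae_iff.2 hν
      exact ae_of_ae_map measurable_snd.aemeasurable this
    have i1 : Integrable (fun p => φ p.1) ρ := by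
      rw [← hρ1] at hφi
      exact hφi.comp_measurable measurable_fst
    have i2 : Integrable (fun p => ψ p.2) ρ := by
      rw [← hρ2] at hψi
      exact hψi.comp_measurable measurable_snd
    have ic : Integrable (fun p => costA A p.1 p.2) ρ := by
      refine Integrable.of_bound continuous_costA.aestronglyMeasurable
        (4 * (1 + 4 * s) * R ^ 4) ?_
      filter_upwards [a1, a2] with p h1 h2
      exact abs_costA_le hR hA (hSn ⟨_, h1⟩) (hTn ⟨_, h2⟩)
    have e1 : ∫ x, φ x ∂μ = ∫ p, φ p.1 ∂ρ := by
      rw [← hρ1] at hφi ⊢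
      exact integral_map measurable_fst.aemeasurable hφi.aestronglyMeasurable
    have e2 : ∫ y, ψ y ∂ν = ∫ p, ψ p.2 ∂ρ := by
      rw [← hρ2] at hψi ⊢
      exact integral_map measurable_snd.aemeasurable hψi.aestronglyMeasurable
    rw [e1, e2, ← integral_add i1 i2]
    refine integral_mono_ae (i1.add i2) ic ?_
    filter_upwards [a1, a2] with p h1 h2
    exact add_cTrans_le hcx hφlip.continuous ⟨p.1, h1⟩ ⟨p.2, h2⟩
  refine ⟨φ, ψ, funext fun y =>
    (sInf_image' (s := S) (f := fun x => costA A x y - φ x)).symm, ?_, ?_, ?_, ?_, ?_, ?_, ?_⟩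
  · refine concaveOn_iInf (convex_closedBall _ _) (fun y => ?_)
      fun x hx => bddBelow_cTrans (c := flip c) hcy ψ₀.continuous ⟨x, hx⟩
    exact (concaveOn_costA (convex_closedBall _ _) _).sub (convexOn_const _ (convex_closedBall _ _))
  · intro x hx
    have := hφb ⟨x, hx⟩
    simp only at this
    linarith
  · intro x hx x' hx'
    have := hφlip.dist_le_mul ⟨x, hx⟩ ⟨x', hx'⟩
    rwa [Real.dist_eq, Subtype.dist_eq, dist_eq_norm] at this
  · refine concaveOn_iInf (convex_closedBall _ _) (fun x => ?_)
      fun y hy => bddBelow_cTrans hcx hφlip.continuous ⟨y, hy⟩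
    simp only [costA_transpose (A := A)]
    exact (concaveOn_costA (convex_closedBall _ _) _).sub (convexOn_const _ (convex_closedBall _ _))
  · intro y hy
    have := hψb ⟨y, hy⟩
    simp only at this
    linarith
  · intro y hy y' hy'
    have := hψlip.dist_le_mul ⟨y, hy⟩ ⟨y', hy'⟩
    rwa [Real.dist_eq, Subtype.dist_eq, dist_eq_norm] at this
  · have hπ' := map_val_mem_couplings hπ
    rw [hμ', hν'] at hπ'
    refine le_antisymm (le_csInf ⟨_, _, hπ', rfl⟩ ?_) ?_
    · rintro _ ⟨ρ, hρ, rfl⟩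
      exact hweak ρ hρ
    · rw [← hgain]
      refine le_trans ?_ hle
      refine csInf_le ⟨(∫ x, φ x ∂μ) + ∫ y, ψ y ∂ν, ?_⟩ ⟨_, hπ', ?_⟩
      · rintro _ ⟨ρ, hρ, rfl⟩
        exact hweak ρ hρ
      · exact ((hSe.prodMap hTe).integral_map fun p => costA A p.1 p.2).symm
end
end

section
/- Let d, m ≥ 1, let ℓ > 0, and let μ be a Borel probability measure on ℝ^d with finite m-th moment M_m(μ) < ∞. For k ∈ ℤ^d, let Q_k^ℓ = ∏_{j=1}^d [k_j ℓ, (k_j+1)ℓ) be the half-open cube of side ℓ. Then | ∫ ‖x‖^m dμ(x) − Σ_{k∈ℤ^d} (sup_{x ∈ Q_k^ℓ} ‖x‖^m) · μ(Q_k^ℓ) | ≤ Σ_{p=0}^{m−1} (m! / p!) · M_p(μ) · (√d · ℓ)^{m−p}. -/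
/-!
Write `D = √d ℓ`, which bounds the diameter of every cube, and let `S k` be the supremum of
`‖·‖ ^ m` over the cube with index `k`. If `k(x)` is the index of the cube containing `x`, then the
sum over cubes is the integral of the step function `x ↦ S (k(x))`: push `μ` forward along the
measurable map `x ↦ k(x)` to the countable set `ℤ^d`. Pointwise,
`‖x‖ ^ m ≤ S (k(x)) ≤ (‖x‖ + D) ^ m`, so by the binomial theorem the difference of the two
integrands lies between `0` and `∑_{p < m} (m choose p) ‖x‖ ^ p D ^ (m - p)`. Integrating and using
`(m choose p) ≤ m! / p!` gives the bound.
-/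

open MeasureTheory
open scoped ENNReal NNReal BigOperators

noncomputable section

/-- The half-open cube of side `ℓ` indexed by `k ∈ ℤ^d`. -/
def cube (d : ℕ) (ℓ : ℝ) (k : Fin d → ℤ) : Set (EuclideanSpace ℝ (Fin d)) :=
  {x | ∀ j, (k j : ℝ) * ℓ ≤ x j ∧ x j < ((k j : ℝ) + 1) * ℓ}

/-- The index of the cube of side `ℓ` containing `x`. -/
def cubeIndex (d : ℕ) (ℓ : ℝ) (x : EuclideanSpace ℝ (Fin d)) : Fin d → ℤ :=
  fun j => ⌊x j / ℓ⌋

lemma mem_cube_iff {d : ℕ} {ℓ : ℝ} (hℓ : 0 < ℓ) (x : EuclideanSpace ℝ (Fin d))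
    (k : Fin d → ℤ) : x ∈ cube d ℓ k ↔ cubeIndex d ℓ x = k := by
  simp only [cube, cubeIndex, Set.mem_ofPred_eq, funext_iff, Int.floor_eq_iff, le_div_iff₀ hℓ,
    div_lt_iff₀ hℓ]

lemma measurable_cubeIndex (d : ℕ) (ℓ : ℝ) : Measurable (cubeIndex d ℓ) := by
  unfold cubeIndex
  fun_prop

lemma norm_le_of_mem_cube {d : ℕ} {ℓ : ℝ} (hℓ : 0 < ℓ) {k : Fin d → ℤ}
    {x y : EuclideanSpace ℝ (Fin d)} (hx : x ∈ cube d ℓ k) (hy : y ∈ cube d ℓ k) :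
    ‖y‖ ≤ ‖x‖ + Real.sqrt d * ℓ := by
  have h : ‖y - x‖ ≤ Real.sqrt d * ℓ := by
    rw [EuclideanSpace.norm_eq]
    apply Real.sqrt_le_iff.2 ⟨by positivity, ?_⟩
    rw [mul_pow, Real.sq_sqrt (Nat.cast_nonneg d)]
    calc ∑ i, ‖(y - x) i‖ ^ 2 ≤ ∑ _i : Fin d, ℓ ^ 2 := by
          refine Finset.sum_le_sum fun i _ => ?_
          have h1 := hx i
          have h2 := hy i
          have : ‖(y - x) i‖ ≤ ℓ := by
            rw [PiLp.sub_apply, Real.norm_eq_abs, abs_le]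
            constructor <;> linarith
          gcongr
      _ = d * ℓ ^ 2 := by simp
  linarith [norm_le_norm_add_norm_sub' y x]

lemma pow_add_le_sum (m : ℕ) {a D : ℝ} (ha : 0 ≤ a) (hD : 0 ≤ D) :
    (a + D) ^ m ≤ a ^ m + ∑ p ∈ Finset.range m,
      ((Nat.factorial m : ℝ) / (Nat.factorial p : ℝ)) * a ^ p * D ^ (m - p) := by
  rw [add_pow, Finset.sum_range_succ, add_comm]
  simp only [Nat.sub_self, pow_zero, Nat.choose_self, Nat.cast_one, mul_one]
  refine add_le_add_right (Finset.sum_le_sum fun p hp => ?_) _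
  rw [mul_comm, ← mul_assoc]
  refine mul_le_mul_of_nonneg_right (mul_le_mul_of_nonneg_right ?_ (by positivity)) (by positivity)
  rw [Nat.cast_choose ℝ (Finset.mem_range.1 hp).le]
  gcongr
  exact le_mul_of_one_le_right (by positivity) (by exact_mod_cast Nat.factorial_pos _)

/-- **Block approximation of moments:** for a probability measure `μ` on `ℝ^d` with finite
`m`-th moment, the difference between `∫ ‖x‖^m dμ` and the sum over cubes `Q_k^ℓ` of
`sup_{Q_k^ℓ} ‖x‖^m · μ(Q_k^ℓ)` is at most `Σ_{p=0}^{m−1} (m!/p!) M_p(μ) (√d ℓ)^{m−p}`. -/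
theorem moment_block_approximation (d m : ℕ) (hd : 1 ≤ d) (hm : 1 ≤ m)
    (ℓ : ℝ) (hℓ : 0 < ℓ)
    (μ : Measure (EuclideanSpace ℝ (Fin d))) [IsProbabilityMeasure μ]
    (hmom : Integrable (fun x => ‖x‖ ^ m) μ) :
    |(∫ x, ‖x‖ ^ m ∂μ)
        - ∑' k : Fin d → ℤ,
            sSup ((fun x : EuclideanSpace ℝ (Fin d) => ‖x‖ ^ m) '' cube d ℓ k)
              * (μ (cube d ℓ k)).toReal|
      ≤ ∑ p ∈ Finset.range m,
          ((Nat.factorial m : ℝ) / (Nat.factorial p : ℝ))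
            * (∫ x, ‖x‖ ^ p ∂μ) * (Real.sqrt d * ℓ) ^ (m - p) := by
  set D : ℝ := Real.sqrt d * ℓ with hDdef
  have hD : 0 ≤ D := by positivity
  set S : (Fin d → ℤ) → ℝ := fun k =>
    sSup ((fun x : EuclideanSpace ℝ (Fin d) => ‖x‖ ^ m) '' cube d ℓ k) with hS
  have hmem : ∀ x, x ∈ cube d ℓ (cubeIndex d ℓ x) := fun x => (mem_cube_iff hℓ x _).2 rfl
  have hub : ∀ x, (‖x‖ + D) ^ m ∈ upperBounds
      ((fun x : EuclideanSpace ℝ (Fin d) => ‖x‖ ^ m) '' cube d ℓ (cubeIndex d ℓ x)) := by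
    rintro x _ ⟨y, hy, rfl⟩
    have := norm_le_of_mem_cube hℓ (hmem x) hy
    dsimp only
    gcongr
  have hlow : ∀ x, ‖x‖ ^ m ≤ S (cubeIndex d ℓ x) := fun x =>
    le_csSup ⟨_, hub x⟩ ⟨x, hmem x, rfl⟩
  have hupp : ∀ x, S (cubeIndex d ℓ x) ≤ ‖x‖ ^ m + ∑ p ∈ Finset.range m,
      ((Nat.factorial m : ℝ) / (Nat.factorial p : ℝ)) * ‖x‖ ^ p * D ^ (m - p) := fun x =>
    (csSup_le (Set.Nonempty.image _ ⟨x, hmem x⟩) (hub x)).trans (pow_add_le_sum m (norm_nonneg x) hD)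
  have hint : ∀ p ∈ Finset.range m,
      Integrable (fun x : EuclideanSpace ℝ (Fin d) => ‖x‖ ^ p) μ := by
    intro p hp
    exact integrable_norm_pow_of_le (f := id) aestronglyMeasurable_id
      (Finset.mem_range.1 hp).le hmom
  have hint' : ∀ p ∈ Finset.range m, Integrable (fun x : EuclideanSpace ℝ (Fin d) =>
      ((Nat.factorial m : ℝ) / (Nat.factorial p : ℝ)) * ‖x‖ ^ p * D ^ (m - p)) μ :=
    fun p hp => ((hint p hp).const_mul _).mul_const _
  have hsum := integrable_finsetSum _ hint'
  have hk := measurable_cubeIndex d ℓ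
  have hSm : Measurable S := measurable_of_countable S
  have hSint : Integrable (fun x => S (cubeIndex d ℓ x)) μ := by
    refine (hmom.add hsum).mono' (hSm.comp hk).aestronglyMeasurable (ae_of_all _ fun x => ?_)
    rw [Real.norm_of_nonneg ((by positivity : (0 : ℝ) ≤ ‖x‖ ^ m).trans (hlow x))]
    exact hupp x
  have htsum : ∑' k : Fin d → ℤ, S k * (μ (cube d ℓ k)).toReal
      = ∫ x, S (cubeIndex d ℓ x) ∂μ := by
    rw [← integral_map hk.aemeasurable hSm.aestronglyMeasurable, integral_countable
      ((integrable_map_measure hSm.aestronglyMeasurable hk.aemeasurable).2 hSint)]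
    refine tsum_congr fun k => ?_
    have : cube d ℓ k = cubeIndex d ℓ ⁻¹' {k} := by
      ext x
      simp [mem_cube_iff hℓ]
    rw [map_measureReal_apply hk (measurableSet_singleton k), this, smul_eq_mul, mul_comm]
    rfl
  change |_ - ∑' k, S k * (μ (cube d ℓ k)).toReal| ≤ _
  rw [htsum, abs_sub_comm, abs_of_nonneg (sub_nonneg.2 (integral_mono hmom hSint hlow)),
    sub_le_iff_le_add']
  refine (integral_mono hSint (hmom.add hsum) hupp).trans_eq ?_
  rw [integral_add' hmom hsum, integral_finsetSum _ hint']
  simp only [integral_mul_const, integral_const_mul]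
end
end
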